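/- Corollary on inner automorphisms: under the hypotheses that 𝕋₁, 𝕋₂ are equational theories over disjoint signatures each possessing a function symbol that is neither constant nor a projection, every categorical inner automorphism of the free model Mₙ of 𝕋₁ + 𝕋₂ on n generators is the identity; equivalently, a family π of endomorphisms π_h : cod(h) → cod(h) indexed by morphisms h with domain Mₙ is an element of the covariant isotropy group 𝒵_{𝕋₁+𝕋₂}(Mₙ) if and only if π_h = id for every h. -/

import Mathlib

/-- First-order terms over symbols `S` with arity `ar` and variables `V`. -/
inductive Tm (S : Type) (ar : S → ℕ) (V : Type) : Type
  | var : V → Tm S ar V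
  | app : (f : S) → (Fin (ar f) → Tm S ar V) → Tm S ar V

namespace Tm
variable {S : Type} {ar : S → ℕ} {V W : Type}

def mapVar (g : V → W) : Tm S ar V → Tm S ar W
  | var v => var (g v)
  | app f ts => app f (fun i => (ts i).mapVar g)

def bind : Tm S ar V → (V → Tm S ar W) → Tm S ar W
  | var v, g => g v
  | app f ts, g => app f (fun i => (ts i).bind g)

/-- All variables of a term belong to a given set. -/
def VarsIn : Tm S ar V → Set V → Prop
  | var v, A => v ∈ A
  | app _ ts, A => ∀ i, VarsIn (ts i) A

/-- The term contains at least one variable. -/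
def HasVar : Tm S ar V → Prop
  | var _ => True
  | app _ ts => ∃ i, HasVar (ts i)

end Tm

/-- The combined signature: operation symbols of the two theories (`op`),
generator constants `y₁,…,yₙ` (`gen`), and indeterminate constants `x = ind 0`,
`xᵢ = ind i` (`ind`). -/
inductive CSym (F : Bool → Type) (n : ℕ) : Type
  | op : (b : Bool) → F b → CSym F n
  | gen : Fin n → CSym F n
  | ind : ℕ → CSym F n

namespace CSym
variable {F : Bool → Type} {n : ℕ}

def arity (arF : ∀ b, F b → ℕ) : CSym F n → ℕ
  | op b f => arF b f
  | gen _ => 0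
  | ind _ => 0

/-- Which of the four component signatures a symbol belongs to:
`0 = Σ₁`, `1 = Σ₂`, `2 = Σ₃`, `3 = Σ₄`. -/
def sig : CSym F n → Fin 4
  | op false _ => 0
  | op true _ => 1
  | gen _ => 2
  | ind _ => 3

end CSym
section Setup

variable (F : Bool → Type) (arF : ∀ b, F b → ℕ) (n : ℕ)

/-- Closed terms over the combined signature `Σ = Σ₁ ∪ Σ₂ ∪ Σ₃ ∪ Σ₄`. -/
abbrev CT := Tm (CSym F n) (CSym.arity arF) Empty

/-- The root symbol of a closed term. -/
def rootSym : CT F arF n → CSym F n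
  | .var v => v.elim
  | .app f _ => f

/-- All symbols of the closed term satisfy the predicate `P`. -/
def InSig (P : CSym F n → Prop) : CT F arF n → Prop
  | .var v => v.elim
  | .app f ts => P f ∧ ∀ i, InSig P (ts i)

/-- A closed term is pure if all of its symbols belong to a single one of the
four component signatures. -/
def IsPure (t : CT F arF n) : Prop := ∃ k : Fin 4, InSig F arF n (fun s => s.sig = k) t

/-- The rank of a closed term: `0` if pure, and otherwise `1` plus the maximal
rank of its alien subterms. -/
def rank : CT F arF n → ℕ
  | .var v => v.elim
  | .app f ts =>
      Finset.univ.sup fun i =>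
        rank (ts i) + (if (rootSym F arF n (ts i)).sig = f.sig then 0 else 1)

/-- The maximal subterms of `t` whose root is outside signature `k`. -/
def aliensUnder (k : Fin 4) : CT F arF n → Set (CT F arF n)
  | .var v => v.elim
  | .app f ts =>
      if f.sig = k then ⋃ i, aliensUnder k (ts i) else {Tm.app f ts}

/-- The alien subterms of a closed term (relative to the signature of its root). -/
def aliensSet : CT F arF n → Set (CT F arF n)
  | .var v => v.elim
  | .app f ts => ⋃ i, aliensUnder F arF n f.sig (ts i)

/-- All alien subterms at arbitrary depth. -/
def allAliensSet : CT F arF n → Set (CT F arF n)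
  | .var v => v.elim
  | .app f ts =>
      ⋃ i, (if (rootSym F arF n (ts i)).sig = f.sig then (∅ : Set _) else {ts i}) ∪
        allAliensSet (ts i)

/-- View a closed combined term through the layer of theory `b`: keep the
top part built from `Σ_b`-symbols and regard the maximal non-`Σ_b`-rooted
subterms as opaque constants. -/
def layerize (b : Bool) : CT F arF n → Tm (F b) (arF b) (CT F arF n)
  | .app (.op b' f) ts =>
      if h : b' = b then h ▸ (Tm.app f (fun i => layerize b' (ts i)))
      else Tm.var (Tm.app (.op b' f) ts)
  | t => Tm.var t

end Setup
section Setup2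

variable (F : Bool → Type) (arF : ∀ b, F b → ℕ) (n : ℕ)
variable (Ax : ∀ b, Set (Tm (F b) (arF b) ℕ × Tm (F b) (arF b) ℕ))

mutual
/-- The isomorphism relation `≅` on closed combined terms, defined together
with the layer congruences: two terms are isomorphic iff their roots lie in the
same component signature and their alien abstractions are congruent modulo the
corresponding theory (for the constant signatures `Σ₃, Σ₄` this is syntactic
equality). -/
inductive Iso : CT F arF n → CT F arF n → Prop where
  | opEq (b : Bool) (u v : CT F arF n) :
      (∃ g : F b, rootSym F arF n u = .op b g) →
      (∃ g : F b, rootSym F arF n v = .op b g) →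
      LEq b (layerize F arF n b u) (layerize F arF n b v) → Iso u v
  | constEq (t : CT F arF n) :
      ((rootSym F arF n t).sig = 2 ∨ (rootSym F arF n t).sig = 3) → Iso t t

/-- The congruence `≈_b` on `Σ_b`-terms whose constants are closed combined
terms (representing their `≅`-classes): generated by the substitution instances
of the axioms of `𝕋_b` together with the identification of `≅`-related
constants. -/
inductive LEq : (b : Bool) →
    Tm (F b) (arF b) (CT F arF n) → Tm (F b) (arF b) (CT F arF n) → Prop where
  | refl (b) (t) : LEq b t t
  | symm {b s t} : LEq b s t → LEq b t s
  | trans {b s t u} : LEq b s t → LEq b t u → LEq b s u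
  | congr (b) (g : F b) (ts us : Fin (arF b g) → Tm (F b) (arF b) (CT F arF n)) :
      (∀ i, LEq b (ts i) (us i)) → LEq b (.app g ts) (.app g us)
  | varRel (b) (s t : CT F arF n) : Iso s t → LEq b (.var s) (.var t)
  | ax (b) (u v : Tm (F b) (arF b) ℕ) : (u, v) ∈ Ax b →
      ∀ σ : ℕ → Tm (F b) (arF b) (CT F arF n), LEq b (u.bind σ) (v.bind σ)
end

end Setup2
section Setup3

variable (F : Bool → Type) (arF : ∀ b, F b → ℕ) (n : ℕ)
variable (Ax : ∀ b, Set (Tm (F b) (arF b) ℕ × Tm (F b) (arF b) ℕ))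

/-- The combined algebra `𝒜 = Term^c(Σ)/≅`. -/
abbrev Alg := Quot (Iso F arF n Ax)

/-- Provable equality in the theory `𝕋_b` on terms with variables (equivalently
the smallest `Σ_b`-congruence containing all substitution instances of the
axioms of `𝕋_b`); with `V := Alg` this is the congruence `≈_b` on
`Term^c(Σ_b, Term^c(Σ)/≅)`. -/
inductive AxCong (b : Bool) {V : Type} : Tm (F b) (arF b) V → Tm (F b) (arF b) V → Prop where
  | refl (t) : AxCong b t t
  | symm {s t} : AxCong b s t → AxCong b t s
  | trans {s t u} : AxCong b s t → AxCong b t u → AxCong b s u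
  | congr (g : F b) (ts us : Fin (arF b g) → Tm (F b) (arF b) V) :
      (∀ i, AxCong b (ts i) (us i)) → AxCong b (.app g ts) (.app g us)
  | ax (u v : Tm (F b) (arF b) ℕ) : (u, v) ∈ Ax b →
      ∀ σ : ℕ → Tm (F b) (arF b) V, AxCong b (u.bind σ) (v.bind σ)

/-- Abstraction of alien subterms: `[t]ᵇ_≅ ∈ Term^c(Σ_b, Term^c(Σ)/≅)`. -/
def absQ (b : Bool) (t : CT F arF n) : Tm (F b) (arF b) (Alg F arF n Ax) :=
  (layerize F arF n b t).mapVar (Quot.mk _)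

attribute [local instance] Classical.propDecidable

/-- The interpretation `t^𝒜` of a closed combined term in the combined algebra:
a term collapses to (the class of) an alien subterm whose class its alien
abstraction is `≈_b`-congruent to, and is interpreted by its own class
otherwise. -/
noncomputable def interp : CT F arF n → Alg F arF n Ax
  | .app (.op b g) ts =>
      let t' : CT F arF n := .app (.op b g) (fun i => (interp (ts i)).out)
      if h : ∃ u, u ∈ aliensSet F arF n t' ∧
          AxCong F arF Ax b (absQ F arF n Ax b t') (.var (Quot.mk _ u))
      then Quot.mk _ h.choose
      else Quot.mk _ t'
  | t => Quot.mk _ t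

end Setup3
section Setup4

variable (F : Bool → Type) (arF : ∀ b, F b → ℕ) (n : ℕ)
variable (Ax : ∀ b, Set (Tm (F b) (arF b) ℕ × Tm (F b) (arF b) ℕ))

/-- Substitution of a closed term `w` for the indeterminate constant `x_j` in a
closed combined term. -/
def substInd (j : ℕ) (w : CT F arF n) : CT F arF n → CT F arF n
  | .var v => v.elim
  | .app (.ind j') ts => if j' = j then w else .app (.ind j') ts
  | .app f ts => .app f (fun i => substInd j w (ts i))

/-- The indeterminate constant `x_i` as a closed term (`x = xTm 0`). -/
def xTm (i : ℕ) : CT F arF n := .app (.ind i) Fin.elim0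

/-- Replace every indeterminate constant occurring in a term by `x`. -/
def indToX : CT F arF n → CT F arF n
  | .var v => v.elim
  | .app (.ind _) _ => xTm F arF n 0
  | .app f ts => .app f (fun i => indToX (ts i))

/-- Embedding of `Σ_b`-terms into combined terms. -/
def embedOp (b : Bool) {V : Type} : Tm (F b) (arF b) V → Tm (CSym F n) (CSym.arity arF) V
  | .var v => .var v
  | .app g ts => .app (.op b g) (fun i => embedOp b (ts i))

/-- Provable equality for the (combination of the) theories `𝕋_b` (`b ∈ B`) on
closed terms over the sub-signature of symbols satisfying `P`: the smallest
congruence on that set of closed terms containing all substitution instances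
(by closed terms over the sub-signature) of the axioms. -/
inductive PE (B : Set Bool) (P : CSym F n → Prop) : CT F arF n → CT F arF n → Prop where
  | refl (t) : InSig F arF n P t → PE B P t t
  | symm {s t} : PE B P s t → PE B P t s
  | trans {s t u} : PE B P s t → PE B P t u → PE B P s u
  | congr (f : CSym F n) (ts us : Fin (CSym.arity arF f) → CT F arF n) : P f →
      (∀ i, PE B P (ts i) (us i)) → PE B P (.app f ts) (.app f us)
  | ax (b : Bool) (hb : b ∈ B) (u v : Tm (F b) (arF b) ℕ) (h : (u, v) ∈ Ax b)
      (σ : ℕ → CT F arF n) : (∀ m, InSig F arF n P (σ m)) →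
      PE B P ((embedOp F arF n b u).bind σ) ((embedOp F arF n b v).bind σ)

/-- The sub-signature consisting of the operations of the theories in `B`, all
generator constants `y₁,…,yₙ`, and the indeterminates `x_j` with `j ∈ J`. -/
def SigP (B : Set Bool) (J : Set ℕ) : CSym F n → Prop
  | .op b _ => b ∈ B
  | .gen _ => True
  | .ind j => j ∈ J

/-- The (combination of the) theories in `B` is non-trivial: it does not prove
the equation `x = y` for distinct variables (equivalently, it does not identify
two distinct indeterminate constants). -/
def Nontriv (B : Set Bool) : Prop :=
  ¬ PE F arF n Ax B (SigP F n B Set.univ) (xTm F arF n 1) (xTm F arF n 2)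

/-- Membership of (the class of) `t` in the logical isotropy group of the free
model on `n` generators of the combination of the theories in `B`: `t` is a
closed term over the signature extended by the constant `x` that is invertible
under substitution into `x` and commutes generically with every operation. -/
def GIso (B : Set Bool) (t : CT F arF n) : Prop :=
  InSig F arF n (SigP F n B {0}) t ∧
  (∃ tinv, InSig F arF n (SigP F n B {0}) tinv ∧
    PE F arF n Ax B (SigP F n B {0}) (substInd F arF n 0 tinv t) (xTm F arF n 0) ∧
    PE F arF n Ax B (SigP F n B {0}) (substInd F arF n 0 t tinv) (xTm F arF n 0)) ∧
  ∀ b, b ∈ B → ∀ g : F b,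
    PE F arF n Ax B (SigP F n B {j | 1 ≤ j ∧ j ≤ arF b g})
      (substInd F arF n 0 (.app (.op b g) (fun i => xTm F arF n (i.val + 1))) t)
      (.app (.op b g) (fun i => substInd F arF n 0 (xTm F arF n (i.val + 1)) t))

/-- `g` is a projection in `𝕋_b`. -/
def IsProj (b : Bool) (g : F b) : Prop :=
  ∃ i : Fin (arF b g),
    AxCong F arF Ax b (V := ℕ) (.app g (fun j => .var j.val)) (.var i.val)

/-- `g` is constant in `𝕋_b`: `𝕋_b` proves `g(y₁,…,y_m) = s` for pairwise
distinct variables none of which occurs in `s`. -/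
def IsConst (b : Bool) (g : F b) : Prop :=
  ∃ s : Tm (F b) (arF b) ℕ, s.VarsIn {m | arF b g ≤ m} ∧
    AxCong F arF Ax b (V := ℕ) (.app g (fun j => .var j.val)) s

end Setup4
section Models

variable (F : Bool → Type) (arF : ∀ b, F b → ℕ) (n : ℕ)
variable (Ax : ∀ b, Set (Tm (F b) (arF b) ℕ × Tm (F b) (arF b) ℕ))

/-- Evaluation of a `Σ_b`-term in a set equipped with operations. -/
def evalTm {α : Type} (ops : ∀ b (g : F b), (Fin (arF b g) → α) → α)
    (b : Bool) {V : Type} (ρ : V → α) : Tm (F b) (arF b) V → α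
  | .var v => ρ v
  | .app g ts => ops b g (fun i => evalTm ops b ρ (ts i))

/-- A (set-based) model of the combined theory `𝕋₁ + 𝕋₂`. -/
structure TModel where
  carrier : Type
  ops : ∀ b (g : F b), (Fin (arF b g) → carrier) → carrier
  sat : ∀ b u v, (u, v) ∈ Ax b → ∀ ρ : ℕ → carrier,
      evalTm F arF ops b ρ u = evalTm F arF ops b ρ v

/-- Homomorphisms of models. -/
@[ext]
structure TModelHom (M N : TModel F arF Ax) where
  toFun : M.carrier → N.carrier
  map_ops : ∀ b (g : F b) (args : Fin (arF b g) → M.carrier),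
      toFun (M.ops b g args) = N.ops b g (fun i => toFun (args i))

/-- The identity homomorphism. -/
def TModelHom.id (M : TModel F arF Ax) : TModelHom F arF Ax M M :=
  ⟨fun a => a, fun _ _ _ => rfl⟩

/-- Composition of homomorphisms. -/
def TModelHom.comp {M M' M'' : TModel F arF Ax} (h' : TModelHom F arF Ax M' M'')
    (h : TModelHom F arF Ax M M') : TModelHom F arF Ax M M'' :=
  ⟨fun a => h'.toFun (h.toFun a), fun b g args => by
    simp [h.map_ops, h'.map_ops]⟩

/-- `M` together with the `n` elements `gens` is a free model on `n`
generators: the universal property. -/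
def IsFreeOn (M : TModel F arF Ax) (gens : Fin n → M.carrier) : Prop :=
  ∀ (N : TModel F arF Ax) (a : Fin n → N.carrier),
    ∃! h : TModelHom F arF Ax M N, ∀ i, h.toFun (gens i) = a i

end Models

section Aux

namespace Tm
variable {S : Type} {ar : S → ℕ} {V W U : Type}

theorem bind_bind (t : Tm S ar V) (g : V → Tm S ar W) (h : W → Tm S ar U) :
    (t.bind g).bind h = t.bind (fun v => (g v).bind h) := by
  induction t with
  | var v => rfl
  | app f ts ih => simp only [bind]; congr 1; funext i; exact ih i

theorem bind_congr_on {t : Tm S ar V} {A : Set V} {g h : V → Tm S ar W}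
    (ht : t.VarsIn A) (hgh : ∀ v ∈ A, g v = h v) : t.bind g = t.bind h := by
  induction t with
  | var v => exact hgh v ht
  | app f ts ih => simp only [bind]; congr 1; funext i; exact ih i (ht i)

theorem VarsIn.mono' {t : Tm S ar V} {A B : Set V} (ht : t.VarsIn A) (hAB : ∀ v ∈ A, v ∈ B) :
    t.VarsIn B := by
  induction t with
  | var v => exact hAB v ht
  | app f ts ih => intro i; exact ih i (ht i)

theorem VarsIn.bind' {t : Tm S ar V} {A : Set V} {B : Set W} {g : V → Tm S ar W}
    (ht : t.VarsIn A) (h : ∀ v ∈ A, (g v).VarsIn B) : (t.bind g).VarsIn B := by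
  induction t with
  | var v => exact h v ht
  | app f ts ih => intro i; exact ih i (ht i)

theorem varsIn_all {t : Tm S ar V} {A : Set V} (h : ∀ v, v ∈ A) : t.VarsIn A := by
  induction t with
  | var v => exact h v
  | app f ts ih => intro i; exact ih i

end Tm

variable {F : Bool → Type} {arF : ∀ b, F b → ℕ}
variable {Ax : ∀ b, Set (Tm (F b) (arF b) ℕ × Tm (F b) (arF b) ℕ)}

theorem evalTm_bind {α : Type} (ops : ∀ b (g : F b), (Fin (arF b g) → α) → α)
    (b : Bool) {V W : Type} (ρ : W → α) (t : Tm (F b) (arF b) V) (τ : V → Tm (F b) (arF b) W) :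
    evalTm F arF ops b ρ (t.bind τ) =
      evalTm F arF ops b (fun v => evalTm F arF ops b ρ (τ v)) t := by
  induction t with
  | var v => rfl
  | app f ts ih => simp only [Tm.bind, evalTm]; congr 1; funext i; exact ih i

theorem evalTm_congr_on {α : Type} (ops : ∀ b (g : F b), (Fin (arF b g) → α) → α)
    (b : Bool) {V : Type} {ρ ρ' : V → α} {t : Tm (F b) (arF b) V} {A : Set V}
    (ht : t.VarsIn A) (h : ∀ v ∈ A, ρ v = ρ' v) :
    evalTm F arF ops b ρ t = evalTm F arF ops b ρ' t := by
  induction t with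
  | var v => exact h v ht
  | app f ts ih => simp only [evalTm]; congr 1; funext i; exact ih i (ht i)

theorem AxCong.sound {b : Bool} {V : Type} {s t : Tm (F b) (arF b) V}
    (h : AxCong F arF Ax b s t) (M : TModel F arF Ax) (ρ : V → M.carrier) :
    evalTm F arF M.ops b ρ s = evalTm F arF M.ops b ρ t := by
  induction h with
  | refl t => rfl
  | symm _ ih => exact ih.symm
  | trans _ _ ih1 ih2 => exact ih1.trans ih2
  | congr g ts us _ ih => simp only [evalTm]; congr 1; funext i; exact ih i
  | ax u v huv σ => rw [evalTm_bind, evalTm_bind]; exact M.sat b u v huv _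

theorem AxCong.bind {b : Bool} {V W : Type} {s t : Tm (F b) (arF b) V}
    (h : AxCong F arF Ax b s t) (τ : V → Tm (F b) (arF b) W) :
    AxCong F arF Ax b (s.bind τ) (t.bind τ) := by
  induction h with
  | refl t => exact .refl _
  | symm _ ih => exact ih.symm
  | trans _ _ ih1 ih2 => exact ih1.trans ih2
  | congr g ts us _ ih => exact .congr g _ _ ih
  | ax u v huv σ => rw [Tm.bind_bind, Tm.bind_bind]; exact .ax u v huv _

theorem AxCong.bind_on {b : Bool} {V W : Type} {t : Tm (F b) (arF b) V} {A : Set V}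
    {τ τ' : V → Tm (F b) (arF b) W} (ht : t.VarsIn A)
    (h : ∀ v ∈ A, AxCong F arF Ax b (τ v) (τ' v)) :
    AxCong F arF Ax b (t.bind τ) (t.bind τ') := by
  induction t with
  | var v => exact h v ht
  | app f ts ih => exact .congr f _ _ (fun i => ih i (ht i))

theorem Tm.bind_var {S : Type} {ar : S → ℕ} {V : Type} (t : Tm S ar V) : t.bind .var = t := by
  induction t with
  | var v => rfl
  | app f ts ih => simp only [Tm.bind]; congr 1; funext i; exact ih i

/-- A symbol that is neither constant nor a projection. -/
def Good (Ax : ∀ b, Set (Tm (F b) (arF b) ℕ × Tm (F b) (arF b) ℕ)) (b : Bool) (g : F b) : Prop :=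
  1 ≤ arF b g ∧ ¬ IsProj F arF Ax b g ∧ ¬ IsConst F arF Ax b g

open Classical in
theorem Good.occurs_var {b : Bool} {g : F b} (hg : Good Ax b g) {V : Type}
    {t : Tm (F b) (arF b) V} {x : V} {A : Set V} (hA : t.VarsIn A)
    (h : AxCong F arF Ax b t (.var x)) : x ∈ A := by
  by_contra hx
  apply hg.2.1
  refine ⟨⟨0, hg.1⟩, ?_⟩
  have h1 := h.bind (fun _ => (.var 0 : Tm (F b) (arF b) ℕ))
  have h2 := h.bind (fun v => if v = x then (.app g (fun j => .var j.val) : Tm (F b) (arF b) ℕ)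
    else .var 0)
  have e : t.bind (fun _ => (.var 0 : Tm (F b) (arF b) ℕ)) =
      t.bind (fun v => if v = x then (.app g (fun j => .var j.val) : Tm (F b) (arF b) ℕ)
        else .var 0) := by
    apply Tm.bind_congr_on hA
    intro v hv
    rw [if_neg]
    rintro rfl
    exact hx hv
  rw [← e] at h2
  simp only [Tm.bind, if_true] at h1 h2
  exact h2.symm.trans h1

open Classical in
theorem Good.occurs {b : Bool} {g : F b} (hg : Good Ax b g) {V : Type}
    {w : Fin (arF b g) → V} (hw : Function.Injective w)
    {t : Tm (F b) (arF b) V} {A : Set V} (hA : t.VarsIn A)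
    (h : AxCong F arF Ax b (.app g (fun j => .var (w j))) t) : ∃ j, w j ∈ A := by
  by_contra hx
  push Not at hx
  apply hg.2.2
  let τ : V → Tm (F b) (arF b) ℕ := fun v =>
    if h : ∃ j, w j = v then .var h.choose.val else .var (arF b g)
  have hτ : ∀ j, τ (w j) = .var j.val := by
    intro j
    have hj : ∃ j', w j' = w j := ⟨j, rfl⟩
    simp only [τ, dif_pos hj]
    rw [hw hj.choose_spec]
  refine ⟨t.bind τ, ?_, ?_⟩
  · apply hA.bind'
    intro v hv
    have : ¬ ∃ j, w j = v := by
      rintro ⟨j, rfl⟩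
      exact hx j hv
    simp only [τ, dif_neg this]
    exact le_refl (arF b g)
  · have := h.bind τ
    simp only [Tm.bind, hτ] at this
    exact this

open Classical in
theorem Good.not_var {b : Bool} {g : F b} (hg : Good Ax b g) {V : Type}
    {w : Fin (arF b g) → V} (hw : Function.Injective w) (x : V)
    (h : AxCong F arF Ax b (.app g (fun j => .var (w j))) (.var x)) : False := by
  obtain ⟨j, hj⟩ := hg.occurs hw (A := {x}) (t := .var x) rfl h
  apply hg.2.1
  let τ : V → Tm (F b) (arF b) ℕ := fun v =>
    if h : ∃ j, w j = v then .var h.choose.val else .var (arF b g)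
  have hτ : ∀ j, τ (w j) = .var j.val := by
    intro j
    have hj : ∃ j', w j' = w j := ⟨j, rfl⟩
    simp only [τ, dif_pos hj]
    rw [hw hj.choose_spec]
  refine ⟨j, ?_⟩
  have hj' : w j = x := hj
  have := h.bind τ
  rw [← hj'] at this
  simp only [Tm.bind, hτ] at this
  exact this

/-- A model which is, for each of the two theories `b`, free over the set of elements whose
root is not `b`. -/
structure TreeLike (M : TModel F arF Ax) (root : M.carrier → Option Bool) : Prop where
  gen : ∀ b x, ∃ T : Tm (F b) (arF b) M.carrier, T.VarsIn {s | root s ≠ some b} ∧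
    evalTm F arF M.ops b id T = x
  free : ∀ b (T T' : Tm (F b) (arF b) M.carrier), T.VarsIn {s | root s ≠ some b} →
    T'.VarsIn {s | root s ≠ some b} →
    evalTm F arF M.ops b id T = evalTm F arF M.ops b id T' → AxCong F arF Ax b T T'
  inf : {x | root x = none}.Infinite

section Tree
variable {M : TModel F arF Ax} {root : M.carrier → Option Bool}

theorem TreeLike.root_app (hM : TreeLike M root) {b : Bool} {g : F b} (hg : Good Ax b g)
    {w : Fin (arF b g) → M.carrier} (hw : Function.Injective w) (hr : ∀ j, root (w j) ≠ some b) :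
    root (M.ops b g w) = some b := by
  by_contra hne
  exact hg.not_var hw (M.ops b g w)
    (hM.free b (.app g (fun j => .var (w j))) (.var (M.ops b g w)) (fun i => hr i) hne rfl)

/-- Elements generated by the root-less elements, with rank at most `k`. -/
def Rk (M : TModel F arF Ax) (root : M.carrier → Option Bool) : ℕ → M.carrier → Prop
  | 0, x => root x = none
  | k + 1, x => root x = none ∨ ∃ b, ∃ T : Tm (F b) (arF b) M.carrier, root x = some b ∧
      T.VarsIn {s | root s ≠ some b ∧ Rk M root k s} ∧ evalTm F arF M.ops b id T = x

theorem Rk.succ {k : ℕ} {x : M.carrier} (h : Rk M root k x) : Rk M root (k + 1) x := by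
  induction k generalizing x with
  | zero => exact Or.inl h
  | succ k ih =>
    rcases h with h | ⟨b, T, hx, hT, e⟩
    · exact Or.inl h
    · exact Or.inr ⟨b, T, hx, hT.mono' (fun v hv => ⟨hv.1, ih hv.2⟩), e⟩

theorem Rk.mono {k l : ℕ} (hkl : k ≤ l) {x : M.carrier} (h : Rk M root k x) :
    Rk M root l x := by
  induction hkl with
  | refl => exact h
  | step _ ih => exact ih.succ

/-- Evaluating a layer on elements of rank at most `k + 1`. -/
theorem Rk.eval (hM : TreeLike M root) {c : Bool} {g : F c} (hg : Good Ax c g) {V : Type} {k : ℕ}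
    {D : Tm (F c) (arF c) V} {A : Set V} (hD : D.VarsIn A) {z : V → M.carrier}
    (hz : ∀ v ∈ A, Rk M root (k + 1) (z v)) :
    (root (evalTm F arF M.ops c z D) ≠ some c → Rk M root (k + 1) (evalTm F arF M.ops c z D)) ∧
    Rk M root (k + 2) (evalTm F arF M.ops c z D) := by
  have key : ∀ v : V, ∃ T : Tm (F c) (arF c) M.carrier, v ∈ A →
      (T.VarsIn {s | root s ≠ some c ∧ Rk M root (k + 1) s} ∧
        evalTm F arF M.ops c id T = z v) := by
    intro v
    by_cases hv : v ∈ A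
    · by_cases hc : root (z v) = some c
      · rcases hz v hv with h | ⟨b, T, hx, hT, e⟩
        · rw [hc] at h; cases h
        · rw [hc] at hx
          cases hx
          exact ⟨T, fun _ => ⟨hT.mono' (fun v hv => ⟨hv.1, hv.2.succ⟩), e⟩⟩
      · exact ⟨.var (z v), fun _ => ⟨⟨hc, hz v hv⟩, rfl⟩⟩
    · exact ⟨.var (z v), fun h => absurd h hv⟩
  choose T hT using key
  have e : evalTm F arF M.ops c id (D.bind T) = evalTm F arF M.ops c z D := by
    rw [evalTm_bind]
    exact evalTm_congr_on _ _ hD (fun v hv => (hT v hv).2)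
  have hB : (D.bind T).VarsIn {s | root s ≠ some c ∧ Rk M root (k + 1) s} :=
    hD.bind' (fun v hv => (hT v hv).1)
  have h1 : root (evalTm F arF M.ops c z D) ≠ some c →
      Rk M root (k + 1) (evalTm F arF M.ops c z D) := by
    intro hr
    have := hM.free c (D.bind T) (.var (evalTm F arF M.ops c z D))
      (hB.mono' (fun v hv => hv.1)) hr e
    exact (hg.occurs_var hB this).2
  refine ⟨h1, ?_⟩
  by_cases hr : root (evalTm F arF M.ops c z D) = some c
  · exact Or.inr ⟨c, D.bind T, hr, hB, e⟩
  · exact (h1 hr).succ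

/-- The graph of the homomorphism extending `φ` from the submodel generated by the root-less
elements. -/
inductive Gr (M : TModel F arF Ax) (root : M.carrier → Option Bool) (N : TModel F arF Ax)
    (φ : M.carrier → N.carrier) : M.carrier → N.carrier → Prop where
  | var (x) : root x = none → Gr M root N φ x (φ x)
  | app (b : Bool) (T : Tm (F b) (arF b) M.carrier) (A : Set M.carrier)
      (ρ : M.carrier → N.carrier) (x : M.carrier) (m : N.carrier) : root x = some b →
      T.VarsIn A → (∀ s ∈ A, root s ≠ some b) → (∀ s ∈ A, Gr M root N φ s (ρ s)) →
      evalTm F arF M.ops b id T = x → evalTm F arF N.ops b ρ T = m → Gr M root N φ x m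

variable {N : TModel F arF Ax} {φ : M.carrier → N.carrier}

open Classical in
theorem Gr.functional (hM : TreeLike M root) {x : M.carrier} {m m' : N.carrier}
    (h : Gr M root N φ x m) (h' : Gr M root N φ x m') : m = m' := by
  induction h generalizing m' with
  | var x hx =>
    cases h' with
    | var _ _ => rfl
    | app b T A ρ _ _ hx' => rw [hx] at hx'; cases hx'
  | app b T A ρ x m hx hT hA hR e em ih =>
    cases h' with
    | var _ hx' => rw [hx] at hx'; cases hx'
    | app b' T' A' ρ' _ _ hx' hT' hA' hR' e' em' =>
      rw [hx] at hx'
      cases hx'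
      have hc := hM.free b T T' (hT.mono' hA) (hT'.mono' hA') (e.trans e'.symm)
      have hs := hc.sound N (fun s => if s ∈ A then ρ s else ρ' s)
      rw [← em, ← em']
      refine Eq.trans (evalTm_congr_on _ _ hT ?_) (hs.trans (evalTm_congr_on _ _ hT' ?_))
      · intro v hv
        rw [if_pos hv]
      · intro v hv
        by_cases hvA : v ∈ A
        · rw [if_pos hvA]
          exact ih v hvA (hR' v hv)
        · rw [if_neg hvA]

theorem Gr.layer {x : M.carrier} {m : N.carrier} (h : Gr M root N φ x m) (b : Bool) :
    ∃ (T : Tm (F b) (arF b) M.carrier) (A : Set M.carrier) (ρ : M.carrier → N.carrier),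
      T.VarsIn A ∧ (∀ s ∈ A, root s ≠ some b) ∧ (∀ s ∈ A, Gr M root N φ s (ρ s)) ∧
      evalTm F arF M.ops b id T = x ∧ evalTm F arF N.ops b ρ T = m := by
  by_cases hr : root x = some b
  · cases h with
    | var _ hx => rw [hr] at hx; cases hx
    | app b' T A ρ _ _ hx hT hA hR e em =>
      rw [hr] at hx
      cases hx
      exact ⟨T, A, ρ, hT, hA, hR, e, em⟩
  · refine ⟨.var x, {x}, fun _ => m, rfl, ?_, ?_, rfl, rfl⟩
    · rintro s rfl; exact hr
    · rintro s rfl; exact h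

/-- A total function selecting values of the graph. -/
theorem Gr.exists_fun (hM : TreeLike M root) (φ : M.carrier → N.carrier) :
    ∃ ev : M.carrier → N.carrier, ∀ x m, Gr M root N φ x m → m = ev x := by
  classical
  refine ⟨fun x => if h : ∃ m, Gr M root N φ x m then h.choose else φ x, ?_⟩
  intro x m h
  have hx : ∃ m, Gr M root N φ x m := ⟨m, h⟩
  simp only [dif_pos hx]
  exact h.functional hM hx.choose_spec

theorem Gr.ops (hM : TreeLike M root) (good : ∀ b, ∃ g, Good Ax b g) {b : Bool} (g : F b)
    {x : Fin (arF b g) → M.carrier} {m : Fin (arF b g) → N.carrier}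
    (h : ∀ i, Gr M root N φ (x i) (m i)) : Gr M root N φ (M.ops b g x) (N.ops b g m) := by
  obtain ⟨ev, hev⟩ := Gr.exists_fun hM φ
  choose T A ρ hT hA hR e em using fun i => (h i).layer b
  have hVT : (Tm.app g T).VarsIn (⋃ i, A i) :=
    fun i => (hT i).mono' (fun v hv => Set.mem_iUnion.2 ⟨i, hv⟩)
  have hVr : ∀ s ∈ ⋃ i, A i, root s ≠ some b := by
    intro s hs
    obtain ⟨i, hi⟩ := Set.mem_iUnion.1 hs
    exact hA i s hi
  have hVG : ∀ s ∈ ⋃ i, A i, Gr M root N φ s (ev s) := by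
    intro s hs
    obtain ⟨i, hi⟩ := Set.mem_iUnion.1 hs
    rw [← hev s _ (hR i s hi)]
    exact hR i s hi
  have e1 : evalTm F arF M.ops b id (.app g T) = M.ops b g x := by
    simp only [evalTm, e]
  have e2 : evalTm F arF N.ops b ev (.app g T) = N.ops b g m := by
    simp only [evalTm]
    congr 1
    funext i
    rw [← em i]
    exact evalTm_congr_on _ _ (hT i) (fun v hv => (hev v _ (hR i v hv)).symm)
  by_cases hr : root (M.ops b g x) = some b
  · exact .app b (.app g T) _ ev _ _ hr hVT hVr hVG e1 e2
  · obtain ⟨g', hg'⟩ := good b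
    have hc := hM.free b (.app g T) (.var (M.ops b g x)) (hVT.mono' hVr) hr e1
    have hs := hc.sound N ev
    have hmem := hg'.occurs_var hVT hc
    rw [← e2, hs]
    exact hVG _ hmem

theorem exists_rank_bound {b : Bool} {T : Tm (F b) (arF b) M.carrier} {A : Set M.carrier}
    (hT : T.VarsIn A) (h : ∀ s ∈ A, root s ≠ some b ∧ ∃ k, Rk M root k s) :
    ∃ k, T.VarsIn {s | root s ≠ some b ∧ Rk M root k s} := by
  induction T with
  | var v =>
    obtain ⟨h1, k, hk⟩ := h v hT
    exact ⟨k, h1, hk⟩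
  | app f ts ih =>
    choose k hk using fun i => ih i (hT i)
    refine ⟨Finset.univ.sup k, fun i => (hk i).mono' ?_⟩
    intro v hv
    exact ⟨hv.1, hv.2.mono (Finset.le_sup (Finset.mem_univ i))⟩

theorem Gr.exists_rk {x : M.carrier} {m : N.carrier} (h : Gr M root N φ x m) :
    ∃ k, Rk M root k x := by
  induction h with
  | var x hx => exact ⟨0, hx⟩
  | app b T A ρ x m hx hT hA hR e em ih =>
    obtain ⟨k, hk⟩ := exists_rank_bound hT (fun s hs => ⟨hA s hs, ih s hs⟩)
    exact ⟨k + 1, Or.inr ⟨b, T, hx, hk, e⟩⟩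

theorem Rk.exists_gr (φ : M.carrier → N.carrier) {k : ℕ} {x : M.carrier}
    (h : Rk M root k x) : ∃ m, Gr M root N φ x m := by
  induction k generalizing x with
  | zero => exact ⟨_, .var x h⟩
  | succ k ih =>
    rcases h with h | ⟨b, T, hx, hT, e⟩
    · exact ⟨_, .var x h⟩
    · have : ∀ s, ∃ m, (root s ≠ some b ∧ Rk M root k s) → Gr M root N φ s m := by
        intro s
        by_cases hs : root s ≠ some b ∧ Rk M root k s
        · obtain ⟨m, hm⟩ := ih hs.2
          exact ⟨m, fun _ => hm⟩
        · exact ⟨φ s, fun h => absurd h hs⟩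
      choose ρ hρ using this
      exact ⟨_, .app b T _ ρ x _ hx hT (fun s hs => hs.1) hρ e rfl⟩

/-- A value of the extended homomorphism is the evaluation of a layer. -/
theorem Gr.eval_eq (hM : TreeLike M root) {b : Bool} {T : Tm (F b) (arF b) M.carrier} {k : ℕ}
    {x : M.carrier} {m : N.carrier} (hx : root x = some b)
    (hT : T.VarsIn {s | root s ≠ some b ∧ Rk M root k s})
    (e : evalTm F arF M.ops b id T = x) (h : Gr M root N φ x m) :
    ∃ ρ : M.carrier → N.carrier,
      (∀ s, root s ≠ some b ∧ Rk M root k s → Gr M root N φ s (ρ s)) ∧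
      evalTm F arF N.ops b ρ T = m := by
  have : ∀ s, ∃ m, (root s ≠ some b ∧ Rk M root k s) → Gr M root N φ s m := by
    intro s
    by_cases hs : root s ≠ some b ∧ Rk M root k s
    · obtain ⟨m, hm⟩ := hs.2.exists_gr (N := N) φ
      exact ⟨m, fun _ => hm⟩
    · exact ⟨φ s, fun h => absurd h hs⟩
  choose ρ hρ using this
  refine ⟨ρ, hρ, ?_⟩
  exact (Gr.app b T _ ρ x _ hx hT (fun s hs => hs.1) hρ e rfl).functional hM h

theorem Gr.rk_le (hM : TreeLike M root) (good : ∀ b, ∃ g, Good Ax b g)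
    {φ : M.carrier → M.carrier} (hφ : ∀ x, root x = none → Rk M root 1 (φ x)) {k : ℕ}
    {x m : M.carrier} (hk : Rk M root k x) (h : Gr M root M φ x m) : Rk M root (k + 1) m := by
  induction k generalizing x m with
  | zero =>
    have := (Gr.var (N := M) (φ := φ) x hk).functional hM h
    rw [← this]
    exact hφ x hk
  | succ k ih =>
    rcases hk with hk | ⟨b, T, hx, hT, e⟩
    · have := (Gr.var (N := M) (φ := φ) x hk).functional hM h
      rw [← this]
      exact (hφ x hk).mono (by omega)
    · obtain ⟨ρ, hρ, em⟩ := h.eval_eq hM hx hT e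
      obtain ⟨g, hg⟩ := good b
      rw [← em]
      exact (Rk.eval hM hg hT (fun s hs => ih hs.2 (hρ s hs))).2

theorem exists_fixed (hM : TreeLike M root) (good : ∀ b, ∃ g, Good Ax b g) (n : ℕ)
    (ν : ℕ → M.carrier) (hν : Function.Injective ν) (hν0 : ∀ j, root (ν j) = none)
    (σ : TModelHom F arF Ax M M) (hσ : Function.Injective σ.toFun)
    (hnat : ∀ φ : M.carrier → M.carrier, (∀ i < n, φ (ν i) = ν i) →
      ∀ x m, Gr M root M φ x m → Gr M root M φ (σ.toFun x) (σ.toFun m)) :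
    ∃ j, n ≤ j ∧ σ.toFun (ν j) = ν j := by
  classical
  by_contra hcon
  push Not at hcon
  -- naturality at an indeterminate
  have hupd : ∀ j, n ≤ j → ∀ a, Gr M root M (Function.update id (ν j) a)
      (σ.toFun (ν j)) (σ.toFun a) := by
    intro j hj a
    apply hnat
    · intro i hi
      rw [Function.update_of_ne]
      · rfl
      · intro h
        have := hν h
        omega
    · have := Gr.var (N := M) (φ := Function.update id (ν j) a) (ν j) (hν0 j)
      rwa [Function.update_self] at this
  have hroot : ∀ j, n ≤ j → root (σ.toFun (ν j)) ≠ none := by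
    intro j hj h0
    have h1 := hupd j hj (ν (j + 1))
    have h2 := (Gr.var (N := M) (φ := Function.update id (ν j) (ν (j + 1))) _ h0).functional hM h1
    rw [Function.update_of_ne (hcon j hj)] at h2
    have h3 := hν (hσ h2)
    omega
  have hb : ∃ b, {j | n ≤ j ∧ root (σ.toFun (ν j)) = some b}.Infinite := by
    by_contra hb
    push Not at hb
    have hfin := (hb true).union (hb false)
    apply Set.infinite_univ_iff.2 (inferInstance : Infinite ℕ)
    refine ((Set.finite_lt_nat n).union hfin).subset ?_
    intro j _
    by_cases hj : n ≤ j
    · right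
      cases hr : root (σ.toFun (ν j)) with
      | none => exact absurd hr (hroot j hj)
      | some b => cases b <;> simp [hj, hr]
    · left
      simpa using hj
  obtain ⟨b, hJ⟩ := hb
  have hex : ∃ k, ∃ j, (n ≤ j ∧ root (σ.toFun (ν j)) = some b) ∧ Rk M root k (σ.toFun (ν j)) := by
    obtain ⟨j, hj⟩ := hJ.nonempty
    obtain ⟨k, hk⟩ := (hupd j hj.1 (ν j)).exists_rk
    exact ⟨k, j, hj, hk⟩
  obtain ⟨j, ⟨hnj, hrj⟩, hkj⟩ := Nat.find_spec hex
  have hmin := fun {m} (hm : m < Nat.find hex) => Nat.find_min hex hm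
  generalize Nat.find hex = k at hkj hmin
  cases k with
  | zero =>
    have hkj' : root (σ.toFun (ν j)) = none := hkj
    rw [hrj] at hkj'
    cases hkj'
  | succ k =>
    rcases hkj with h | ⟨b', T, hx, hT, e⟩
    · rw [hrj] at h
      cases h
    rw [hrj] at hx
    cases hx
    obtain ⟨g, hg⟩ := good (!b)
    obtain ⟨gb, hgb⟩ := good b
    let ι := hJ.natEmbedding
    let v : Fin (arF (!b) g) → M.carrier := fun i => ν (ι i.val)
    have hv : Function.Injective v := by
      intro i i' h
      exact Fin.ext (ι.injective (Subtype.ext (hν h)))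
    have hv0 : ∀ i, root (v i) = none := fun i => hν0 _
    have hw : Function.Injective (fun i => σ.toFun (v i)) := hσ.comp hv
    have hwr : ∀ i, root (σ.toFun (v i)) = some b := fun i => (ι i.val).2.2
    have hwr' : ∀ i, root (σ.toFun (v i)) ≠ some (!b) := by
      intro i
      rw [hwr i]
      cases b <;> simp
    have heroot : root (M.ops (!b) g v) = some (!b) :=
      hM.root_app hg hv (fun i => by rw [hv0 i]; simp)
    have herk : Rk M root 1 (M.ops (!b) g v) := by
      refine Or.inr ⟨!b, .app g (fun i => .var (v i)), heroot, ?_, rfl⟩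
      intro i
      refine ⟨?_, hv0 i⟩
      rw [hv0 i]
      simp
    have hxroot : root (σ.toFun (M.ops (!b) g v)) = some (!b) := by
      rw [σ.map_ops]
      exact hM.root_app hg hw hwr'
    have hG := hupd j hnj (M.ops (!b) g v)
    obtain ⟨ρ, hρ, em⟩ := hG.eval_eq hM hrj hT e
    have hρk : ∀ s, root s ≠ some b ∧ Rk M root k s → Rk M root (k + 1) (ρ s) := by
      intro s hs
      refine Gr.rk_le hM good ?_ hs.2 (hρ s hs)
      intro x hx
      by_cases hxe : x = ν j
      · subst hxe
        rw [Function.update_self]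
        exact herk
      · rw [Function.update_of_ne hxe]
        exact Or.inl hx
    have hfin : Rk M root (k + 1) (σ.toFun (M.ops (!b) g v)) := by
      have := (Rk.eval hM hgb hT hρk).1
      rw [em] at this
      apply this
      rw [hxroot]
      cases b <;> simp
    rcases hfin with h | ⟨b', T', hx', hT', e'⟩
    · rw [hxroot] at h
      cases h
    rw [hxroot] at hx'
    cases hx'
    have hc := hM.free (!b) (.app g (fun i => .var (σ.toFun (v i)))) T' (fun i => hwr' i)
      (hT'.mono' (fun s hs => hs.1)) (by rw [e', σ.map_ops]; rfl)
    obtain ⟨i, hi⟩ := hg.occurs hw hT' hc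
    exact hmin (Nat.lt_succ_self k) ⟨ι i.val, (ι i.val).2, hi.2⟩

/-- The submodel of the product given by the graph. -/
def grModel (hM : TreeLike M root) (good : ∀ b, ∃ g, Good Ax b g) (N : TModel F arF Ax)
    (φ : M.carrier → N.carrier) : TModel F arF Ax where
  carrier := {p : M.carrier × N.carrier // Gr M root N φ p.1 p.2}
  ops b g args := ⟨(M.ops b g (fun i => (args i).1.1), N.ops b g (fun i => (args i).1.2)),
    Gr.ops hM good g (fun i => (args i).2)⟩
  sat b u v huv ρ := by
    have h1 : ∀ t : Tm (F b) (arF b) ℕ, (evalTm F arF (α := {p : M.carrier × N.carrier //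
        Gr M root N φ p.1 p.2}) (fun b g args => ⟨(M.ops b g (fun i => (args i).1.1),
        N.ops b g (fun i => (args i).1.2)), Gr.ops hM good g (fun i => (args i).2)⟩) b ρ t).1 =
        (evalTm F arF M.ops b (fun j => (ρ j).1.1) t,
          evalTm F arF N.ops b (fun j => (ρ j).1.2) t) := by
      intro t
      induction t with
      | var v => rfl
      | app f ts ih => simp only [evalTm, ih]
    apply Subtype.ext
    rw [h1, h1, M.sat b u v huv, N.sat b u v huv]

theorem nat_graph (hM : TreeLike M root) (good : ∀ b, ∃ g, Good Ax b g) {n : ℕ}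
    {M₀ : TModel F arF Ax} {gens : Fin n → M₀.carrier} (hfree : IsFreeOn F arF n Ax M₀ gens)
    (π : ∀ M : TModel F arF Ax, TModelHom F arF Ax M₀ M → TModelHom F arF Ax M M)
    (hπ : ∀ (M M' : TModel F arF Ax) (h : TModelHom F arF Ax M₀ M)
          (h' : TModelHom F arF Ax M M'),
          TModelHom.comp F arF Ax h' (π M h) =
            TModelHom.comp F arF Ax (π M' (TModelHom.comp F arF Ax h' h)) h')
    (h1 : TModelHom F arF Ax M₀ M) (h2 : TModelHom F arF Ax M₀ N)
    (hr : ∀ i, root (h1.toFun (gens i)) = none)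
    (hφ : ∀ i, φ (h1.toFun (gens i)) = h2.toFun (gens i))
    {x : M.carrier} {m : N.carrier} (h : Gr M root N φ x m) :
    Gr M root N φ ((π M h1).toFun x) ((π N h2).toFun m) := by
  let P := grModel hM good N φ
  let p1 : TModelHom F arF Ax P M := ⟨fun p => p.1.1, fun _ _ _ => rfl⟩
  let p2 : TModelHom F arF Ax P N := ⟨fun p => p.1.2, fun _ _ _ => rfl⟩
  obtain ⟨hP, hPg, -⟩ := hfree P (fun i => ⟨(h1.toFun (gens i), h2.toFun (gens i)), by
    have := Gr.var (N := N) (φ := φ) _ (hr i)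
    rwa [hφ i] at this⟩)
  have e1 : TModelHom.comp F arF Ax p1 hP = h1 := by
    refine (hfree M (fun i => h1.toFun (gens i))).unique ?_ (fun _ => rfl)
    intro i
    change (hP.toFun (gens i)).1.1 = _
    rw [hPg i]
  have e2 : TModelHom.comp F arF Ax p2 hP = h2 := by
    refine (hfree N (fun i => h2.toFun (gens i))).unique ?_ (fun _ => rfl)
    intro i
    change (hP.toFun (gens i)).1.2 = _
    rw [hPg i]
  have n1 := congrArg (fun q => q.toFun ⟨(x, m), h⟩) (hπ P M hP p1)
  have n2 := congrArg (fun q => q.toFun ⟨(x, m), h⟩) (hπ P N hP p2)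
  rw [e1] at n1
  rw [e2] at n2
  have n1' : ((π P hP).toFun ⟨(x, m), h⟩).1.1 = (π M h1).toFun x := n1
  have n2' : ((π P hP).toFun ⟨(x, m), h⟩).1.2 = (π N h2).toFun m := n2
  rw [← n1', ← n2']
  exact ((π P hP).toFun ⟨(x, m), h⟩).2

theorem isotropy_trivial (hM : TreeLike M root) (good : ∀ b, ∃ g, Good Ax b g) {n : ℕ}
    {M₀ : TModel F arF Ax} {gens : Fin n → M₀.carrier} (hfree : IsFreeOn F arF n Ax M₀ gens)
    (π : ∀ M : TModel F arF Ax, TModelHom F arF Ax M₀ M → TModelHom F arF Ax M M)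
    (hπ : ∀ (M M' : TModel F arF Ax) (h : TModelHom F arF Ax M₀ M)
          (h' : TModelHom F arF Ax M M'),
          TModelHom.comp F arF Ax h' (π M h) =
            TModelHom.comp F arF Ax (π M' (TModelHom.comp F arF Ax h' h)) h')
    (hbij : ∀ M h, Function.Bijective (π M h).toFun)
    (N : TModel F arF Ax) (h : TModelHom F arF Ax M₀ N) : π N h = TModelHom.id F arF Ax N := by
  classical
  let ι := hM.inf.natEmbedding
  let ν : ℕ → M.carrier := fun j => ι j
  have hν : Function.Injective ν := fun i j h => ι.injective (Subtype.ext h)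
  have hν0 : ∀ j, root (ν j) = none := fun j => (ι j).2
  obtain ⟨h1, hg1, -⟩ := hfree M (fun i => ν i.val)
  have hr : ∀ i, root (h1.toFun (gens i)) = none := by
    intro i
    rw [hg1 i]
    exact hν0 _
  obtain ⟨j, hj, hfix⟩ := exists_fixed hM good n ν hν hν0 (π M h1) (hbij M h1).1 (by
    intro φ hφ x m hG
    refine nat_graph hM good hfree π hπ h1 h1 hr ?_ hG
    intro i
    rw [hg1 i]
    exact hφ i.val i.isLt)
  apply TModelHom.ext
  funext a
  change (π N h).toFun a = a
  let φ : M.carrier → N.carrier := fun x =>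
    if hx : ∃ i : Fin n, ν i.val = x then h.toFun (gens hx.choose) else a
  have hφ : ∀ i, φ (h1.toFun (gens i)) = h.toFun (gens i) := by
    intro i
    rw [hg1 i]
    have hx : ∃ i' : Fin n, ν i'.val = ν i.val := ⟨i, rfl⟩
    simp only [φ, dif_pos hx]
    rw [Fin.ext (hν hx.choose_spec)]
  have hφj : φ (ν j) = a := by
    have hx : ¬ ∃ i : Fin n, ν i.val = ν j := by
      rintro ⟨i, hi⟩
      have := hν hi
      omega
    simp only [φ, dif_neg hx]
  have hG : Gr M root N φ (ν j) a := by
    have := Gr.var (N := N) (φ := φ) (ν j) (hν0 j)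
    rwa [hφj] at this
  have hG' := nat_graph hM good hfree π hπ h1 h hr hφ hG
  rw [hfix] at hG'
  exact hG'.functional hM hG

end Tree

section Construction

theorem AxCong.equivalence (b : Bool) (V : Type) :
    Equivalence (AxCong F arF Ax b (V := V)) :=
  ⟨.refl, .symm, .trans⟩

/-- The free `𝕋_b`-algebra. -/
abbrev Fr (Ax : ∀ b, Set (Tm (F b) (arF b) ℕ × Tm (F b) (arF b) ℕ)) (b : Bool) (V : Type) : Type :=
  Quot (AxCong F arF Ax b (V := V))

theorem Fr.exact {b : Bool} {V : Type} {s t : Tm (F b) (arF b) V}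
    (h : (Quot.mk _ s : Fr Ax b V) = Quot.mk _ t) : AxCong F arF Ax b s t :=
  (AxCong.equivalence b V).quot_mk_eq_iff s t |>.1 h

/-- Encoding of terms as a W-type. -/
def Tm.toW {S : Type} {ar : S → ℕ} {V : Type} :
    Tm S ar V → WType (fun a : V ⊕ S => Sum.elim (fun _ => Fin 0) (fun f => Fin (ar f)) a)
  | .var v => ⟨Sum.inl v, fun i => Fin.elim0 i⟩
  | .app f ts => ⟨Sum.inr f, fun i => (ts i).toW⟩

theorem Tm.toW_injective {S : Type} {ar : S → ℕ} {V : Type} :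
    Function.Injective (Tm.toW (S := S) (ar := ar) (V := V)) := by
  intro s
  induction s with
  | var v =>
    intro t h
    cases t with
    | var w => simp only [Tm.toW] at h; injection h with h1 h2; injection h1 with h1; rw [h1]
    | app f ts => simp only [Tm.toW] at h; injection h with h1 h2; cases h1
  | app f ss ih =>
    intro t h
    cases t with
    | var w => simp only [Tm.toW] at h; injection h with h1 h2; cases h1
    | app g ts =>
      simp only [Tm.toW] at h
      injection h with h1 h2
      injection h1 with h1
      subst h1
      congr 1
      funext i
      exact ih i (congrFun (eq_of_heq h2) i)

theorem exists_treeLike (good : ∀ b, ∃ g, Good Ax b g) :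
    ∃ (M : TModel F arF Ax) (root : M.carrier → Option Bool), TreeLike M root := by
  classical
  let K : Type := ℕ ⊕ (F false ⊕ F true)
  let X : Type := K × Option Bool
  let Sb : Bool → Type := fun b => {x : X // x.2 ≠ some b}
  have hK : Cardinal.aleph0 ≤ Cardinal.mk K := Cardinal.infinite_iff.1 inferInstance
  -- terms inject into `K`
  have hTm : ∀ b, Nonempty (Tm (F b) (arF b) (Sb b) ↪ K) := by
    intro b
    rw [← Cardinal.le_def]
    refine (Cardinal.mk_le_of_injective Tm.toW_injective).trans ?_
    have hfin : ∀ a : Sb b ⊕ F b,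
        Finite (Sum.elim (fun _ => Fin 0) (fun f => Fin (arF b f)) a : Type) := by
      rintro (a | a)
      · exact inferInstanceAs (Finite (Fin 0))
      · exact inferInstanceAs (Finite (Fin (arF b a)))
    refine (WType.cardinalMk_le_max_aleph0_of_finite).trans ?_
    refine max_le ?_ hK
    have hX : Cardinal.mk X ≤ Cardinal.mk K := by
      have : Cardinal.mk X = Cardinal.mk K * Cardinal.mk (Option Bool) := by
        simp [X]
      rw [this]
      exact Cardinal.mul_le_of_le hK le_rfl
        ((Cardinal.lt_aleph0_of_finite (Option Bool)).le.trans hK)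
    have hS : Cardinal.mk (Sb b) ≤ Cardinal.mk K := (Cardinal.mk_subtype_le _).trans hX
    have hF : Cardinal.mk (F b) ≤ Cardinal.mk K := by
      cases b
      · exact Cardinal.mk_le_of_injective (f := fun x => Sum.inr (Sum.inl x))
          (fun x y h => Sum.inl.inj (Sum.inr.inj h))
      · exact Cardinal.mk_le_of_injective (f := fun x => Sum.inr (Sum.inr x))
          (fun x y h => Sum.inr.inj (Sum.inr.inj h))
    rw [Cardinal.mk_sum, Cardinal.lift_id, Cardinal.lift_id]
    exact Cardinal.add_le_of_le hK hS hF
  have hKN : Nonempty (K × ℕ ↪ K) := by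
    rw [← Cardinal.le_def, Cardinal.mk_prod, Cardinal.lift_id, Cardinal.lift_id]
    exact Cardinal.mul_le_of_le hK le_rfl (by simp)
  obtain ⟨κ⟩ := hKN
  -- the bijections
  have hβ : ∀ b, ∃ β : Fr Ax b (Sb b) ≃ X, ∀ s : Sb b, β (Quot.mk _ (.var s)) = s.1 := by
    intro b
    obtain ⟨g, hg⟩ := good b
    let η : Sb b → Fr Ax b (Sb b) := fun s => Quot.mk _ (.var s)
    have hη : Function.Injective η := by
      intro s t h
      have := hg.occurs_var (A := {s}) (t := .var s) rfl (Fr.exact h)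
      exact this.symm
    have hsome : ∀ k : K, ((k, none) : X).2 ≠ some b := by intro k; simp
    let w : K → Fin (arF b g) → Sb b := fun k i => ⟨(κ (k, i.val), none), hsome _⟩
    have hwi : ∀ k k' i i', w k i = w k' i' → k = k' ∧ i = i' := by
      intro k k' i i' h
      have h1 := congrArg (fun s => s.1.1) h
      have h2 := κ.injective h1
      simp only [Prod.mk.injEq] at h2
      exact ⟨h2.1, Fin.ext h2.2⟩
    have hw : ∀ k, Function.Injective (w k) := fun k i i' h => (hwi _ _ _ _ h).2
    let C : Set (Fr Ax b (Sb b)) := (Set.range η)ᶜ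
    have emb1 : K ↪ C := by
      refine ⟨fun k => ⟨Quot.mk _ (.app g (fun i => .var (w k i))), ?_⟩, ?_⟩
      · rintro ⟨s, hs⟩
        exact hg.not_var (hw k) s (Fr.exact hs.symm)
      · intro k k' h
        have h' := Fr.exact (congrArg Subtype.val h)
        obtain ⟨i, i', hi⟩ := hg.occurs (hw k) (A := Set.range (w k'))
          (fun i => ⟨i, rfl⟩) h'
        exact (hwi _ _ _ _ hi).1.symm
    have emb2 : C ↪ K := by
      have e := (hTm b).some
      refine ⟨fun c => e (Quot.out c.1), ?_⟩
      intro c c' h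
      have h' := e.injective h
      apply Subtype.ext
      rw [← Quot.out_eq c.1, ← Quot.out_eq c'.1, h']
    obtain ⟨γ⟩ := Function.Embedding.antisymm emb2 emb1
    let f : X → Fr Ax b (Sb b) := fun x =>
      if h : x.2 ≠ some b then η ⟨x, h⟩ else (γ.symm x.1).1
    have hf : Function.Bijective f := by
      constructor
      · intro x y hxy
        by_cases hx : x.2 ≠ some b <;> by_cases hy : y.2 ≠ some b
        · simp only [f, dif_pos hx, dif_pos hy] at hxy
          exact congrArg Subtype.val (hη hxy)
        · simp only [f, dif_pos hx, dif_neg hy] at hxy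
          exact absurd ⟨_, hxy⟩ (γ.symm y.1).2
        · simp only [f, dif_neg hx, dif_pos hy] at hxy
          exact absurd ⟨_, hxy.symm⟩ (γ.symm x.1).2
        · simp only [f, dif_neg hx, dif_neg hy] at hxy
          have := γ.symm.injective (Subtype.ext hxy)
          push Not at hx hy
          exact Prod.ext this (hx.trans hy.symm)
      · intro z
        by_cases hz : z ∈ Set.range η
        · obtain ⟨s, rfl⟩ := hz
          exact ⟨s.1, dif_pos s.2⟩
        · refine ⟨(γ ⟨z, hz⟩, some b), ?_⟩
          simp [f]
    refine ⟨(Equiv.ofBijective f hf).symm, ?_⟩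
    intro s
    rw [Equiv.symm_apply_eq]
    have hs : f s.1 = η s := dif_pos s.2
    exact hs.symm
  choose β hβ using hβ
  let r : ∀ b, X → Tm (F b) (arF b) (Sb b) := fun b x => Quot.out ((β b).symm x)
  have hr : ∀ b x, β b (Quot.mk _ (r b x)) = x := by
    intro b x
    simp only [r, Quot.out_eq]
    exact (β b).apply_symm_apply x
  let ops : ∀ b (g : F b), (Fin (arF b g) → X) → X := fun b g args =>
    β b (Quot.mk _ (.app g (fun i => r b (args i))))
  have heval : ∀ (b : Bool) (V : Type) (ρ : V → X) (t : Tm (F b) (arF b) V),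
      evalTm F arF ops b ρ t = β b (Quot.mk _ (t.bind (fun v => r b (ρ v)))) := by
    intro b V ρ t
    induction t with
    | var v => exact (hr b (ρ v)).symm
    | app g ts ih =>
      simp only [evalTm, ops, Tm.bind]
      congr 1
      apply Quot.sound
      apply AxCong.congr
      intro i
      apply Fr.exact
      apply (β b).injective
      rw [hr, ih]
  let M : TModel F arF Ax := ⟨X, ops, by
    intro b u v huv ρ
    rw [heval, heval]
    congr 1
    exact Quot.sound (.ax u v huv _)⟩
  have hrs : ∀ b (s : Sb b), AxCong F arF Ax b (r b s.1) (.var s) := by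
    intro b s
    apply Fr.exact
    apply (β b).injective
    rw [hr, hβ]
  refine ⟨M, Prod.snd, ?_, ?_, ?_⟩
  · intro b x
    refine ⟨(r b x).bind (fun s => .var s.1), ?_, ?_⟩
    · exact (Tm.varsIn_all (A := Set.univ) (fun v => trivial)).bind' (fun s _ => s.2)
    · change evalTm F arF ops b id _ = x
      rw [evalTm_bind, heval]
      refine Eq.trans ?_ (hr b x)
      congr 1
      apply Quot.sound
      have := AxCong.bind_on (Ax := Ax) (t := r b x) (A := Set.univ) (τ := fun s => r b s.1)
        (τ' := Tm.var) (Tm.varsIn_all (fun v => trivial)) (fun s _ => hrs b s)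
      rw [Tm.bind_var] at this
      exact this
  · intro b T T' hT hT' e
    change evalTm F arF ops b id T = evalTm F arF ops b id T' at e
    rw [heval, heval] at e
    have h1 := (Fr.exact ((β b).injective e)).bind (fun s => Tm.var s.1)
    rw [Tm.bind_bind, Tm.bind_bind] at h1
    have h2 : ∀ U : Tm (F b) (arF b) X, U.VarsIn {s : X | s.2 ≠ some b} →
        AxCong F arF Ax b (U.bind (fun v => (r b (id v)).bind (fun s => Tm.var s.1))) U := by
      intro U hU
      have := AxCong.bind_on (Ax := Ax) (τ := fun v => (r b (id v)).bind (fun s => Tm.var s.1))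
        (τ' := Tm.var) hU (fun v hv => (hrs b ⟨v, hv⟩).bind (fun s => Tm.var s.1))
      rw [Tm.bind_var] at this
      exact this
    exact ((h2 T hT).symm.trans h1).trans (h2 T' hT')
  · refine Set.infinite_of_injective_forall_mem (f := fun k : K => ((k, none) : X)) ?_ ?_
    · intro k k' h
      exact congrArg Prod.fst h
    · intro k
      rfl

end Construction
end Aux

section Statement
variable (F : Bool → Type) (arF : ∀ b, F b → ℕ) (n : ℕ)
variable (Ax : ∀ b, Set (Tm (F b) (arF b) ℕ × Tm (F b) (arF b) ℕ))

/-- Corollary on inner automorphisms: under the hypotheses of the main theorem,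
a family of endomorphisms indexed by morphisms out of the free model `Mₙ` is an
element of the covariant isotropy group iff every component is the identity; in
particular every categorical inner automorphism of `Mₙ` is the identity. -/
theorem inner_automorphisms_trivial
    (hyp : ∀ b, ∃ g : F b, 1 ≤ arF b g ∧ ¬ IsProj F arF Ax b g ∧ ¬ IsConst F arF Ax b g)
    (M₀ : TModel F arF Ax) (gens : Fin n → M₀.carrier)
    (hfree : IsFreeOn F arF n Ax M₀ gens) :
    (∀ π : ∀ M : TModel F arF Ax, TModelHom F arF Ax M₀ M → TModelHom F arF Ax M M,
      ((∀ (M M' : TModel F arF Ax) (h : TModelHom F arF Ax M₀ M)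
          (h' : TModelHom F arF Ax M M'),
          TModelHom.comp F arF Ax h' (π M h) =
            TModelHom.comp F arF Ax (π M' (TModelHom.comp F arF Ax h' h)) h') ∧
        (∀ M h, Function.Bijective (π M h).toFun)) ↔
      (∀ M h, π M h = TModelHom.id F arF Ax M)) ∧
    (∀ h : TModelHom F arF Ax M₀ M₀,
      (∃ π : ∀ M : TModel F arF Ax, TModelHom F arF Ax M₀ M → TModelHom F arF Ax M M,
        (∀ (M M' : TModel F arF Ax) (hh : TModelHom F arF Ax M₀ M)
          (h' : TModelHom F arF Ax M M'),
          TModelHom.comp F arF Ax h' (π M hh) =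
            TModelHom.comp F arF Ax (π M' (TModelHom.comp F arF Ax h' hh)) h') ∧
        (∀ M hh, Function.Bijective (π M hh).toFun) ∧
        π M₀ (TModelHom.id F arF Ax M₀) = h) →
      h = TModelHom.id F arF Ax M₀) := by
  have good : ∀ b, ∃ g, Good Ax b g := hyp
  obtain ⟨M, root, hM⟩ := exists_treeLike good
  refine ⟨fun π => ⟨fun h => isotropy_trivial hM good hfree π h.1 h.2, fun h => ⟨?_, ?_⟩⟩, ?_⟩
  · intro M M' k k'
    rw [h, h]
    rfl
  · intro M k
    rw [h]
    exact Function.bijective_id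
  · rintro h ⟨π, h1, h2, rfl⟩
    exact isotropy_trivial hM good hfree π h1 h2 _ _
end Statement
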